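/- arXiv:2211.09094 — 3 statements merged into one kernel-verified Lean document; each statement's English description precedes it below -/
import Mathlib

section
/- There exists a universal constant C > 0 such that for all integers n ≥ 2, m ≥ 1 and all 1 ≤ s ≤ t ≤ nm, one has 0 ≤ E[max_{1≤i≤n} X_i(t)] − E[max_{1≤i≤n} X_i(s)] ≤ C·((t−s)/√n + 1). -/
open Finset

/-- The maximum entry of a tuple `j : Fin n → Fin (m+1)`, as a natural number. -/
def maxEntry {n m : ℕ} (j : Fin n → Fin (m + 1)) : ℕ :=
  Finset.univ.sup (fun i => (j i : ℕ))

/-- Expected value of `max_i X_i(t)` for the multivariate hypergeometric counts. -/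
noncomputable def expMaxHyper (n m t : ℕ) : ℝ :=
  ∑ j ∈ univ.filter (fun j : Fin n → Fin (m + 1) => ∑ i, (j i : ℕ) = t),
    ((∏ i, (Nat.choose m (j i : ℕ) : ℝ)) / (Nat.choose (n * m) t : ℝ)) * (maxEntry j : ℝ)

/-
The bottom `t` cards of a shuffled deck are the image of a fixed `t`-set of positions under a
uniformly random permutation, so one permutation couples the hands of all sizes. The maximal count
is monotone and subadditive in the hand, hence passing from `s` to `t` cards raises its mean by at
least `0` and at most the mean over a hand of `t - s` cards. A hand with maximal count `M ≥ 1` has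
at least `M (M - 1) ≥ (M - 1) ^ 2` ordered pairs of distinct cards of one type, while a hand of `k`
cards has on average at most `k ^ 2 p` such pairs, where `p` is the probability that two random
cards agree. By Cauchy-Schwarz the mean of `M` is at most `k √p + 1`, and `p ≤ 1 / n` when all `n`
types are equally frequent.
-/

open scoped BigOperators Pointwise

section GroupAverage

variable {G X M : Type*} [Group G] [Fintype G] [MulAction G X] [AddCommMonoid M] [Module ℚ≥0 M]

lemma expect_smul_smul (f : X → M) (g : G) (x : X) :
    𝔼 h : G, f (h • g • x) = 𝔼 h : G, f (h • x) :=
  Fintype.expect_equiv (Equiv.mulRight g) _ _ fun h => by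
    rw [Equiv.coe_mulRight, mul_smul]

lemma expect_smul_eq_expect_of_mem_iff_mem_orbit (f : X → M) {s : Finset X} {x : X}
    (hs : ∀ y, y ∈ s ↔ y ∈ MulAction.orbit G x) :
    𝔼 g : G, f (g • x) = 𝔼 y ∈ s, f y := by
  have avg_group : ∀ y ∈ s, 𝔼 g : G, f (g • y) = 𝔼 g : G, f (g • x) := fun y hy => by
    obtain ⟨g, rfl⟩ := (hs y).1 hy
    exact expect_smul_smul f g x
  have smul_mem_iff (g : G) (y : X) : y ∈ s ↔ g • y ∈ s := by
    rw [hs, hs, ← MulAction.orbit_eq_iff, ← MulAction.orbit_eq_iff, MulAction.orbit_smul]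
  have avg_orbit (g : G) : 𝔼 y ∈ s, f (g • y) = 𝔼 y ∈ s, f y :=
    expect_equiv (MulAction.toPerm g) (smul_mem_iff g) fun _ _ => rfl
  have hne : s.Nonempty := ⟨x, (hs x).2 (MulAction.mem_orbit_self x)⟩
  calc 𝔼 g : G, f (g • x) = 𝔼 y ∈ s, 𝔼 g : G, f (g • y) := by
        rw [expect_congr rfl avg_group, expect_const hne]
    _ = 𝔼 g : G, 𝔼 y ∈ s, f (g • y) := expect_comm _ _ _
    _ = 𝔼 y ∈ s, f y := by simp only [avg_orbit, Fintype.expect_const]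

end GroupAverage

section PermOrbits

variable {Ω : Type*}

lemma mem_orbit_perm_iff_card_eq [DecidableEq Ω] {A B : Finset Ω} :
    B ∈ MulAction.orbit (Equiv.Perm Ω) A ↔ #B = #A := by
  constructor
  · rintro ⟨σ, rfl⟩
    exact card_smul_finset σ A
  · intro hB
    obtain ⟨σ, hσ⟩ := (Set.powersetCard.isPretransitive (α := Ω) (n := #A)).exists_smul_eq
      ⟨A, rfl⟩ ⟨B, hB⟩
    exact ⟨σ, congrArg Subtype.val hσ⟩

lemma mem_orbit_perm_iff_fst_ne_snd {q r : Ω × Ω} (hq : q.1 ≠ q.2) :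
    r ∈ MulAction.orbit (Equiv.Perm Ω) q ↔ r.1 ≠ r.2 := by
  constructor
  · rintro ⟨σ, rfl⟩
    exact (MulAction.injective σ).ne hq
  · intro hr
    obtain ⟨σ, h₁, h₂⟩ := MulAction.is_two_pretransitive_iff.1
      (Equiv.Perm.isMultiplyPretransitive Ω 2) hq hr
    exact ⟨σ, Prod.ext h₁ h₂⟩

end PermOrbits

lemma offDiag_smul_finset {G Ω : Type*} [Group G] [MulAction G Ω] [DecidableEq Ω] (g : G)
    (A : Finset Ω) : (g • A).offDiag = g • A.offDiag := by
  ext q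
  simp [← inv_smul_mem_iff, mem_offDiag]

section RandomSubset

variable {Ω M : Type*} [Fintype Ω] [AddCommMonoid M] [Module ℚ≥0 M]

lemma expect_powersetCard_card [DecidableEq Ω] (f : Finset Ω → M) (A : Finset Ω) :
    𝔼 B ∈ powersetCard #A univ, f B = 𝔼 σ : Equiv.Perm Ω, f (σ • A) :=
  (expect_smul_eq_expect_of_mem_iff_mem_orbit f fun B => by
    rw [mem_powersetCard_univ, mem_orbit_perm_iff_card_eq]).symm

lemma expect_perm_smul_eq_expect_offDiag [DecidableEq Ω] (f : Ω × Ω → M) {q : Ω × Ω}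
    (hq : q.1 ≠ q.2) :
    𝔼 σ : Equiv.Perm Ω, f (σ • q) = 𝔼 r ∈ univ.offDiag, f r :=
  expect_smul_eq_expect_of_mem_iff_mem_orbit f fun r => by
    simp [mem_orbit_perm_iff_fst_ne_snd hq, mem_offDiag]

lemma expect_powersetCard_card_sum_offDiag (f : Ω × Ω → M) (A : Finset Ω) :
    𝔼 B ∈ powersetCard #A univ, ∑ q ∈ B.offDiag, f q =
      #A.offDiag • 𝔼 q ∈ univ.offDiag, f q := by
  classical
  have sum_smul (σ : Equiv.Perm Ω) :
      ∑ q ∈ (σ • A).offDiag, f q = ∑ q ∈ A.offDiag, f (σ • q) := by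
    rw [offDiag_smul_finset, smul_finset_def, sum_image (MulAction.injective σ).injOn]
  rw [expect_powersetCard_card]
  simp only [sum_smul, expect_sum_comm]
  exact sum_eq_card_nsmul fun q hq =>
    expect_perm_smul_eq_expect_offDiag f (mem_offDiag.1 hq).2.2

variable [PartialOrder M] [IsOrderedAddMonoid M] [PosSMulMono ℚ≥0 M]

lemma expect_powersetCard_mono {f : Finset Ω → M} (hf : Monotone f) {s t : ℕ} (hst : s ≤ t)
    (ht : t ≤ Fintype.card Ω) :
    𝔼 A ∈ powersetCard s univ, f A ≤ 𝔼 A ∈ powersetCard t univ, f A := by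
  classical
  obtain ⟨B, -, rfl⟩ := exists_subset_card_eq (s := (univ : Finset Ω)) ht
  obtain ⟨A, hAB, rfl⟩ := exists_subset_card_eq hst
  simp only [expect_powersetCard_card]
  exact expect_le_expect fun σ _ => hf (smul_finset_subset_smul_finset hAB)

lemma expect_powersetCard_add_le [DecidableEq Ω] {f : Finset Ω → M}
    (hf : ∀ A B, f (A ∪ B) ≤ f A + f B) {s d : ℕ} (h : s + d ≤ Fintype.card Ω) :
    𝔼 A ∈ powersetCard (s + d) univ, f A ≤
      𝔼 A ∈ powersetCard s univ, f A + 𝔼 A ∈ powersetCard d univ, f A := by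
  obtain ⟨B, -, hB⟩ := exists_subset_card_eq (s := (univ : Finset Ω)) h
  obtain ⟨A, hAB, rfl⟩ := exists_subset_card_eq (s := B) (n := s) (by lia)
  obtain rfl : #(B \ A) = d := by rw [card_sdiff_of_subset hAB]; lia
  rw [← hB]
  simp only [expect_powersetCard_card, ← expect_add_distrib]
  refine expect_le_expect fun σ _ => ?_
  calc f (σ • B) = f (σ • A ∪ σ • (B \ A)) := by
        rw [← smul_finset_union, union_sdiff_of_subset hAB]
    _ ≤ f (σ • A) + f (σ • (B \ A)) := hf _ _

end RandomSubset

lemma sq_expect_le_expect_sq {α : Type*} (s : Finset α) (f : α → ℝ) :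
    (𝔼 a ∈ s, f a) ^ 2 ≤ 𝔼 a ∈ s, f a ^ 2 := by
  rcases s.eq_empty_or_nonempty with rfl | hs
  · simp
  · simpa [expect_const hs] using expect_mul_sq_le_sq_mul_sq s f fun _ => 1

lemma expect_sqrt_le_sqrt_expect {α : Type*} (s : Finset α) {f : α → ℝ}
    (hf : ∀ a ∈ s, 0 ≤ f a) : 𝔼 a ∈ s, √(f a) ≤ √(𝔼 a ∈ s, f a) := by
  refine Real.le_sqrt_of_sq_le ((sq_expect_le_expect_sq s _).trans_eq ?_)
  exact expect_congr rfl fun a ha => Real.sq_sqrt (hf a ha)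

section TypeCounts

variable {Ω ι : Type*} [DecidableEq ι] (c : Ω → ι)

/-- The ordered pairs of distinct cards of the hand `A` having the same type, where `c` assigns to
each card its type. -/
def sameTypePairs (A : Finset Ω) : Finset (Ω × Ω) :=
  {q ∈ A.offDiag | c q.1 = c q.2}

lemma filter_sameTypePairs_eq (A : Finset Ω) (i : ι) :
    {q ∈ sameTypePairs c A | c q.1 = i} = {a ∈ A | c a = i}.offDiag := by
  ext q
  simp only [sameTypePairs, mem_filter, mem_offDiag]
  grind

variable [Fintype ι]

/-- The largest number of cards of a single type in the hand `A`, where `c` assigns to each card its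
type; it is `0` if there are no types. -/
def maxCount (A : Finset Ω) : ℕ :=
  univ.sup fun i => #{a ∈ A | c a = i}

lemma maxCount_mono : Monotone (maxCount c) := fun _ _ h =>
  Finset.sup_mono_fun fun _ _ => card_le_card (filter_subset_filter _ h)

lemma maxCount_union_le [DecidableEq Ω] (A B : Finset Ω) :
    maxCount c (A ∪ B) ≤ maxCount c A + maxCount c B := by
  refine Finset.sup_le fun i _ => ?_
  rw [filter_union]
  exact (card_union_le _ _).trans (add_le_add
    (le_sup (f := fun i => #{a ∈ A | c a = i}) (mem_univ i))
    (le_sup (f := fun i => #{a ∈ B | c a = i}) (mem_univ i)))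

lemma maxCount_mul_self_sub_le (A : Finset Ω) :
    maxCount c A * maxCount c A - maxCount c A ≤ #(sameTypePairs c A) := by
  rcases (univ : Finset ι).eq_empty_or_nonempty with h | h
  · simp [maxCount, h]
  obtain ⟨i, -, hi⟩ := exists_mem_eq_sup univ h fun i => #{a ∈ A | c a = i}
  rw [maxCount, hi, ← offDiag_card, ← filter_sameTypePairs_eq]
  exact card_filter_le _ _

lemma maxCount_le_sqrt_card_sameTypePairs_add_one (A : Finset Ω) :
    (maxCount c A : ℝ) ≤ √(#(sameTypePairs c A) : ℝ) + 1 := by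
  rw [← sub_le_iff_le_add]
  rcases Nat.eq_zero_or_pos (maxCount c A) with h | h
  · rw [h, Nat.cast_zero, zero_sub]
    exact neg_one_lt_zero.le.trans (Real.sqrt_nonneg _)
  · have h' : (1 : ℝ) ≤ maxCount c A := by exact_mod_cast h
    have hle : ((maxCount c A * maxCount c A - maxCount c A : ℕ) : ℝ) ≤
        #(sameTypePairs c A) := by exact_mod_cast maxCount_mul_self_sub_le c A
    rw [Nat.cast_sub (Nat.le_mul_self _), Nat.cast_mul] at hle
    exact Real.le_sqrt_of_sq_le (by linarith)

end TypeCounts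

section Deck

variable {Ω ι : Type*} [Fintype Ω] [DecidableEq ι] (c : Ω → ι)

/-- The probability that two distinct cards drawn at random from the deck `Ω` have the same type,
where `c` assigns to each card its type; it is `0` if `Ω` has fewer than two cards. -/
noncomputable def collisionProb : ℝ :=
  𝔼 q ∈ univ.offDiag, if c q.1 = c q.2 then 1 else 0

lemma collisionProb_eq_card_div_card :
    collisionProb c = #(sameTypePairs c univ) / #(univ : Finset Ω).offDiag := by
  rw [collisionProb, expect_eq_sum_div_card, sum_boole, sameTypePairs]

lemma expect_powersetCard_card_sameTypePairs (A : Finset Ω) :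
    𝔼 B ∈ powersetCard #A univ, (#(sameTypePairs c B) : ℝ) =
      #A.offDiag * collisionProb c := by
  rw [collisionProb, ← nsmul_eq_mul, ← expect_powersetCard_card_sum_offDiag]
  simp only [sameTypePairs, sum_boole]

variable [Fintype ι]

lemma collisionProb_le_inv_card {m : ℕ} (hc : ∀ i, #{x | c x = i} = m) :
    collisionProb c ≤ (Fintype.card ι : ℝ)⁻¹ := by
  have card_deck : Fintype.card Ω = Fintype.card ι * m := by
    rw [← card_univ, card_eq_sum_card_fiberwise (f := c) (t := univ) (by simp)]
    simp [hc]
  have card_mono : #(sameTypePairs c univ) = Fintype.card ι * (m * m - m) := by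
    rw [card_eq_sum_card_fiberwise (f := fun q => c q.1) (t := univ) (by simp)]
    simp [filter_sameTypePairs_eq, offDiag_card, hc]
  have h : Fintype.card ι * #(sameTypePairs c univ) ≤ #(univ : Finset Ω).offDiag := by
    rw [offDiag_card, card_univ, card_deck, card_mono]
    calc Fintype.card ι * (Fintype.card ι * (m * m - m))
        = Fintype.card ι * m * (Fintype.card ι * m) - Fintype.card ι * Fintype.card ι * m := by
          rw [Nat.mul_sub, Nat.mul_sub]
          ring_nf
      _ ≤ _ := Nat.sub_le_sub_left (Nat.mul_le_mul_right _ (Nat.le_mul_self _)) _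
  rw [collisionProb_eq_card_div_card]
  rcases Nat.eq_zero_or_pos (Fintype.card ι) with hι | hι
  · simp [card_mono, hι]
  · refine div_le_of_le_mul₀ (by positivity) (by positivity) ?_
    rw [inv_mul_eq_div, le_div_iff₀' (by exact_mod_cast hι)]
    exact_mod_cast h

/-- The expected number of cards of the most frequent type among `t` cards drawn at random from the
deck `Ω`, where `c` assigns to each card its type; it is `0` if `Ω` has fewer than `t` cards. -/
noncomputable def meanMaxCount (t : ℕ) : ℝ :=
  𝔼 A ∈ powersetCard t univ, (maxCount c A : ℝ)

lemma meanMaxCount_le {t : ℕ} (ht : t ≤ Fintype.card Ω) :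
    meanMaxCount c t ≤ t * √(collisionProb c) + 1 := by
  obtain ⟨A, -, rfl⟩ := exists_subset_card_eq (s := (univ : Finset Ω)) ht
  have collisionProb_nonneg : 0 ≤ collisionProb c :=
    expect_nonneg fun q _ => by split_ifs <;> norm_num
  calc meanMaxCount c #A
      ≤ 𝔼 B ∈ powersetCard #A univ, (√(#(sameTypePairs c B) : ℝ) + 1) :=
        expect_le_expect fun B _ => maxCount_le_sqrt_card_sameTypePairs_add_one c B
    _ = 𝔼 B ∈ powersetCard #A univ, √(#(sameTypePairs c B) : ℝ) + 1 := by
        rw [expect_add_distrib, expect_const (powersetCard_nonempty.2 ht)]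
    _ ≤ √(𝔼 B ∈ powersetCard #A univ, (#(sameTypePairs c B) : ℝ)) + 1 := by
        gcongr
        exact expect_sqrt_le_sqrt_expect _ fun _ _ => Nat.cast_nonneg _
    _ = √(#A.offDiag * collisionProb c) + 1 := by
        rw [expect_powersetCard_card_sameTypePairs]
    _ ≤ √((#A : ℝ) ^ 2 * collisionProb c) + 1 := by
        gcongr
        rw [offDiag_card, sq]
        exact_mod_cast Nat.sub_le _ _
    _ = #A * √(collisionProb c) + 1 := by
        rw [Real.sqrt_mul (sq_nonneg _), Real.sqrt_sq (Nat.cast_nonneg _)]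

lemma meanMaxCount_mono {s t : ℕ} (hst : s ≤ t) (ht : t ≤ Fintype.card Ω) :
    meanMaxCount c s ≤ meanMaxCount c t :=
  expect_powersetCard_mono (fun _ _ h => Nat.cast_le.2 (maxCount_mono c h)) hst ht

lemma meanMaxCount_add_le {s d : ℕ} (h : s + d ≤ Fintype.card Ω) :
    meanMaxCount c (s + d) ≤ meanMaxCount c s + meanMaxCount c d := by
  classical
  exact expect_powersetCard_add_le (fun A B => by exact_mod_cast maxCount_union_le c A B) h

end Deck

theorem stmt8_general {Ω ι : Type*} [Fintype Ω] [Fintype ι] [DecidableEq ι] (c : Ω → ι)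
    {s t : ℕ} (hst : s ≤ t) (ht : t ≤ Fintype.card Ω) :
    0 ≤ meanMaxCount c t - meanMaxCount c s ∧
      meanMaxCount c t - meanMaxCount c s ≤ ((t : ℝ) - s) * √(collisionProb c) + 1 := by
  refine ⟨sub_nonneg.2 (meanMaxCount_mono c hst ht), ?_⟩
  obtain ⟨d, rfl⟩ := Nat.exists_eq_add_of_le hst
  rw [Nat.cast_add, add_sub_cancel_left, sub_le_iff_le_add']
  exact (meanMaxCount_add_le c ht).trans <| by gcongr; exact meanMaxCount_le c (by lia)

section Hypergeometric

lemma card_filter_card_fiber_eq {Ω ι : Type*} [Fintype Ω] [Fintype ι] [DecidableEq ι]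
    (c : Ω → ι) (j : ι → ℕ) :
    #{A : Finset Ω | ∀ i, #{a ∈ A | c a = i} = j i} =
      ∏ i, (#{x | c x = i}).choose (j i) := by
  classical
  simp only [← card_powersetCard, ← Fintype.card_piFinset]
  have filter_glue {F : ι → Finset Ω}
      (hF : F ∈ Fintype.piFinset fun i => powersetCard (j i) {x | c x = i}) (i : ι) :
      {a ∈ univ.filter fun a => a ∈ F (c a) | c a = i} = F i := by
    ext a
    have := (mem_powersetCard.1 (Fintype.mem_piFinset.1 hF i)).1 (x := a)
    grind
  refine card_nbij' (fun A i => {a ∈ A | c a = i}) (fun F => univ.filter fun a => a ∈ F (c a))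
    ?_ ?_ ?_ ?_
  · intro A hA
    have hA : ∀ i, #{a ∈ A | c a = i} = j i := by simpa using hA
    simpa [mem_powersetCard, hA] using fun i => filter_subset_filter _ (subset_univ A)
  · intro F hF
    simpa [filter_glue hF] using fun i => (mem_powersetCard.1 (Fintype.mem_piFinset.1 hF i)).2
  · intro A _
    ext a
    simp
  · exact fun F hF => funext (filter_glue hF)

lemma card_filter_fst_eq {ι κ : Type*} [Fintype ι] [DecidableEq ι] [Fintype κ] (i : ι) :
    #{p : ι × κ | p.1 = i} = Fintype.card κ := by
  have : ({p : ι × κ | p.1 = i} : Finset _) = {i} ×ˢ univ := by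
    ext ⟨a, b⟩
    simp [eq_comm]
  rw [this, card_product, card_singleton, one_mul, card_univ]

lemma sqrt_collisionProb_fst_le_inv_sqrt (n m : ℕ) :
    √(collisionProb (Prod.fst : Fin n × Fin m → Fin n)) ≤ (√n)⁻¹ := by
  rw [← Real.sqrt_inv]
  gcongr
  simpa using collisionProb_le_inv_card (Prod.fst : Fin n × Fin m → Fin n) card_filter_fst_eq

variable {n m : ℕ}

/-- The numbers of cards of each type in the hand `A`; the card `(i, k)` is the `k`-th copy of the
card of type `i`. -/
def typeCounts (A : Finset (Fin n × Fin m)) (i : Fin n) : Fin (m + 1) :=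
  ⟨#{p ∈ A | p.1 = i}, Nat.lt_succ_of_le <|
    (card_le_card (filter_subset_filter _ (subset_univ A))).trans_eq <| by
      simp [card_filter_fst_eq]⟩

lemma sum_typeCounts (A : Finset (Fin n × Fin m)) : ∑ i, (typeCounts A i : ℕ) = #A :=
  (card_eq_sum_card_fiberwise fun _ _ => mem_coe.2 (mem_univ _)).symm

lemma card_filter_powersetCard_typeCounts_eq (j : Fin n → Fin (m + 1)) :
    #{A ∈ powersetCard (∑ i, (j i : ℕ)) (univ : Finset (Fin n × Fin m)) | typeCounts A = j} =
      ∏ i, m.choose (j i) := by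
  have mem_iff (A : Finset (Fin n × Fin m)) :
      #A = ∑ i, (j i : ℕ) ∧ typeCounts A = j ↔ ∀ i, #{p ∈ A | p.1 = i} = j i := by
    have typeCounts_eq_iff : typeCounts A = j ↔ ∀ i, #{p ∈ A | p.1 = i} = j i := by
      simp only [funext_iff, Fin.ext_iff, typeCounts]
    rw [← typeCounts_eq_iff, and_iff_right_iff_imp]
    rintro rfl
    exact (sum_typeCounts A).symm
  have card_eq := card_filter_card_fiber_eq (Prod.fst : Fin n × Fin m → Fin n) fun i => (j i : ℕ)
  simp only [card_filter_fst_eq, Fintype.card_fin] at card_eq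
  rw [← card_eq]
  congr 1
  ext A
  simp only [mem_filter, mem_powersetCard_univ, mem_univ, true_and, mem_iff]

lemma sum_powersetCard_maxCount_of_typeCounts_eq (j : Fin n → Fin (m + 1)) :
    ∑ A ∈ powersetCard (∑ i, (j i : ℕ)) univ with typeCounts A = j,
        (maxCount (Prod.fst : Fin n × Fin m → Fin n) A : ℝ) =
      (∏ i, (m.choose (j i) : ℝ)) * maxEntry j := by
  have maxCount_eq : ∀ A ∈ (powersetCard (∑ i, (j i : ℕ)) univ).filter (typeCounts · = j),
      (maxCount (Prod.fst : Fin n × Fin m → Fin n) A : ℝ) = maxEntry j := by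
    intro A hA
    rw [← (mem_filter.1 hA).2]
    rfl
  rw [sum_eq_card_nsmul maxCount_eq, nsmul_eq_mul, card_filter_powersetCard_typeCounts_eq,
    Nat.cast_prod]

lemma expMaxHyper_eq_meanMaxCount (n m t : ℕ) :
    expMaxHyper n m t = meanMaxCount (Prod.fst : Fin n × Fin m → Fin n) t := by
  have maps_to : ∀ A ∈ powersetCard t (univ : Finset (Fin n × Fin m)),
      typeCounts A ∈ univ.filter fun j : Fin n → Fin (m + 1) => ∑ i, (j i : ℕ) = t := by
    intro A hA
    rw [mem_filter_univ, sum_typeCounts, mem_powersetCard_univ.1 hA]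
  rw [meanMaxCount, expect_eq_sum_div_card, ← sum_fiberwise_of_maps_to maps_to, sum_div,
    expMaxHyper]
  refine sum_congr rfl fun j hj => ?_
  obtain rfl := (mem_filter.1 hj).2
  rw [sum_powersetCard_maxCount_of_typeCounts_eq, card_powersetCard, card_univ,
    Fintype.card_prod, Fintype.card_fin, Fintype.card_fin, div_mul_eq_mul_div]

end Hypergeometric

theorem stmt8 :
    ∃ C > 0, ∀ n m s t : ℕ, 2 ≤ n → 1 ≤ m → 1 ≤ s → s ≤ t → t ≤ n * m →
      0 ≤ expMaxHyper n m t - expMaxHyper n m s ∧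
      expMaxHyper n m t - expMaxHyper n m s ≤ C * (((t : ℝ) - s) / Real.sqrt n + 1) := by
  refine ⟨1, one_pos, fun n m s t _ _ _ hst ht => ?_⟩
  obtain ⟨h_nonneg, h_le⟩ :=
    stmt8_general (Prod.fst : Fin n × Fin m → Fin n) hst (by simpa using ht)
  simp only [expMaxHyper_eq_meanMaxCount, one_mul, div_eq_mul_inv]
  refine ⟨h_nonneg, h_le.trans ?_⟩
  gcongr
  · exact sub_nonneg.2 (Nat.cast_le.2 hst)
  · exact sqrt_collisionProb_fst_le_inv_sqrt n m
end

section
/- For every ε > 0 there exists a constant C_ε > 0 such that the following holds. Let n, m ≥ 2 be integers and s ∈ (0, 1/e] with s·nm ≥ 1, and suppose √(2 ln n / m)·(ln(nm))^{1+ε} ≤ 1. For each 1 ≤ t ≤ nm let Y_1(t),...,Y_n(t) be i.i.d. Binomial(m, t/(nm)) random variables. Then Σ_{t=1}^{⌊s·nm⌋} E[max_{1≤i≤n} Y_i(t) − t/n]/t ≤ C_ε·√(m·ln n)·(ln(1/s))^{−ε}. -/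
open Finset

/-- The probability `P(Y = k)` for `Y ~ Binomial(m, p)`. -/
noncomputable def binomPMF (m : ℕ) (p : ℝ) (k : ℕ) : ℝ :=
  (Nat.choose m k : ℝ) * p ^ k * (1 - p) ^ (m - k)

/-- Expected value of `max_i Y_i` for `Y_1, …, Y_n` i.i.d. `Binomial(m, p)`. -/
noncomputable def expMaxBinom (n m : ℕ) (p : ℝ) : ℝ :=
  ∑ j : Fin n → Fin (m + 1), (∏ i, binomPMF m p (j i : ℕ)) * (maxEntry j : ℝ)

/-!
Jensen's inequality and a union bound give `l * E[max Y_i] ≤ log n + m * p * (exp l - 1)` for every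
`l`. Optimising over `0 < l ≤ 1` yields the maximal inequality
`E[max Y_i] - m * p ≤ 2 * √(m * p * log n) + 2 * log n`. Dividing by `t` and summing over `t ≤ N`,
the square root contributes `√(m * log n) * √s`, and `√s` decays faster than any power of
`log (1 / s)`. The other term contributes `log n * log (n * m)`, which the smallness assumption on
`log n / m` bounds by `√(m * log n) * log (n * m) ^ (-ε)`; finally `1 / s ≤ n * m`.
-/

section ProductWeights

variable {ι κ R : Type*} [Fintype ι] [DecidableEq ι] [Fintype κ] [CommSemiring R] {w : κ → R}

lemma sum_prod_apply_eq_one (hw : ∑ k, w k = 1) : ∑ j : ι → κ, ∏ i, w (j i) = 1 := by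
  rw [← Fintype.prod_sum fun (_ : ι) (k : κ) => w k]
  simp only [hw, prod_const_one]

lemma sum_prod_apply_mul_apply (hw : ∑ k, w k = 1) (g : κ → R) (a : ι) :
    ∑ j : ι → κ, (∏ i, w (j i)) * g (j a) = ∑ k, w k * g k := by
  calc ∑ j : ι → κ, (∏ i, w (j i)) * g (j a)
      = ∑ j : ι → κ, ∏ i, w (j i) * (if i = a then g (j i) else 1) := by
        simp only [prod_mul_distrib, prod_ite_eq', mem_univ, if_true]
    _ = ∏ i : ι, ∑ k, w k * (if i = a then g k else 1) :=
        (Fintype.prod_sum fun (i : ι) (k : κ) => w k * (if i = a then g k else 1)).symm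
    _ = ∑ k, w k * g k := by
        rw [Fintype.prod_eq_single a fun i hi => by simp only [hi, if_false, mul_one, hw]]
        simp only [if_true]

end ProductWeights

lemma apply_univ_sup_le_sum_apply {ι α : Type*} [Fintype ι] [Nonempty ι] [LinearOrder α]
    [OrderBot α] {g : α → ℝ} (hg : ∀ a, 0 ≤ g a) (f : ι → α) :
    g (univ.sup f) ≤ ∑ i, g (f i) := by
  obtain ⟨a, -, ha⟩ := exists_mem_eq_sup univ univ_nonempty f
  rw [ha]
  exact single_le_sum (f := fun i => g (f i)) (fun i _ => hg (f i)) (mem_univ a)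

lemma sub_le_of_forall_mul_le_add_mul_exp_sub_one {L u f : ℝ} (hL : 0 < L) (hu : 0 ≤ u)
    (h : ∀ l : ℝ, 0 < l → l * f ≤ L + u * (Real.exp l - 1)) :
    f - u ≤ 2 * √(u * L) + 2 * L := by
  have quadratic {l : ℝ} (hl₀ : 0 < l) (hl₁ : l ≤ 1) : l * f ≤ L + u * (l + l ^ 2) := by
    have exp_le : Real.exp l - 1 - l ≤ l ^ 2 :=
      (le_abs_self _).trans (Real.abs_exp_sub_one_sub_id_le (by rwa [abs_of_pos hl₀]))
    refine (h l hl₀).trans ?_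
    gcongr
    linarith
  rcases le_total u L with huL | hLu
  · linarith [quadratic one_pos le_rfl, Real.sqrt_nonneg (u * L)]
  · have hu_pos : 0 < u := hL.trans_le hLu
    -- `l = √(L / u)` balances `L / l` against `u * l`.
    obtain ⟨l, hl₀, rfl⟩ : ∃ l > 0, L = u * l ^ 2 := by
      refine ⟨√(L / u), Real.sqrt_pos.2 (div_pos hL hu_pos), ?_⟩
      rw [Real.sq_sqrt (div_pos hL hu_pos).le, mul_div_cancel₀ _ hu_pos.ne']
    have hl₁ : l ≤ 1 := by
      have : l ^ 2 ≤ 1 := le_of_mul_le_mul_left (by simpa using hLu) hu_pos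
      exact (sq_le_one_iff₀ hl₀.le).1 this
    have hf : f ≤ 2 * (u * l) + u := by
      refine le_of_mul_le_mul_left ((quadratic hl₀ hl₁).trans_eq ?_) hl₀
      ring
    have hsqrt : √(u * (u * l ^ 2)) = u * l := by
      rw [← Real.sqrt_sq (mul_nonneg hu_pos.le hl₀.le)]
      congr 1
      ring
    rw [hsqrt]
    linarith

section Binomial

lemma binomPMF_nonneg {m : ℕ} {p : ℝ} (hp₀ : 0 ≤ p) (hp₁ : p ≤ 1) (k : ℕ) :
    0 ≤ binomPMF m p k :=
  mul_nonneg (mul_nonneg (Nat.cast_nonneg _) (pow_nonneg hp₀ k))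
    (pow_nonneg (sub_nonneg.2 hp₁) (m - k))

lemma sum_binomPMF_mul_pow (m : ℕ) (p x : ℝ) :
    ∑ k : Fin (m + 1), binomPMF m p k * x ^ (k : ℕ) = (1 - p + p * x) ^ m := by
  rw [Fin.sum_univ_eq_sum_range (fun k => binomPMF m p k * x ^ k), add_comm (1 - p), add_pow]
  refine sum_congr rfl fun k _ => ?_
  rw [binomPMF, mul_pow]
  ring

lemma sum_binomPMF (m : ℕ) (p : ℝ) : ∑ k : Fin (m + 1), binomPMF m p k = 1 := by
  simpa using sum_binomPMF_mul_pow m p 1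

variable {n m : ℕ} {p : ℝ}

lemma prod_binomPMF_nonneg (hp₀ : 0 ≤ p) (hp₁ : p ≤ 1) (j : Fin n → Fin (m + 1)) :
    0 ≤ ∏ i, binomPMF m p (j i) :=
  prod_nonneg fun i _ => binomPMF_nonneg hp₀ hp₁ (j i)

lemma sum_prod_binomPMF_mul_exp_maxEntry_le (hn : n ≠ 0) (hp₀ : 0 ≤ p) (hp₁ : p ≤ 1) (l : ℝ) :
    ∑ j : Fin n → Fin (m + 1), (∏ i, binomPMF m p (j i)) * Real.exp (l * maxEntry j) ≤
      n * (1 - p + p * Real.exp l) ^ m := by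
  have : Nonempty (Fin n) := Fin.pos_iff_nonempty.1 (Nat.pos_of_ne_zero hn)
  have union_bound (j : Fin n → Fin (m + 1)) :
      Real.exp (l * maxEntry j) ≤ ∑ a, Real.exp l ^ (j a : ℕ) := by
    rw [mul_comm, Real.exp_nat_mul]
    exact apply_univ_sup_le_sum_apply (g := fun k => Real.exp l ^ k)
      (fun k => pow_nonneg (Real.exp_pos l).le k) (fun i => (j i : ℕ))
  calc ∑ j : Fin n → Fin (m + 1), (∏ i, binomPMF m p (j i)) * Real.exp (l * maxEntry j)
      ≤ ∑ j : Fin n → Fin (m + 1),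
          (∏ i, binomPMF m p (j i)) * ∑ a, Real.exp l ^ (j a : ℕ) :=
        sum_le_sum fun j _ =>
          mul_le_mul_of_nonneg_left (union_bound j) (prod_binomPMF_nonneg hp₀ hp₁ j)
    _ = ∑ a : Fin n, ∑ j : Fin n → Fin (m + 1),
          (∏ i, binomPMF m p (j i)) * Real.exp l ^ (j a : ℕ) := by
        simp only [mul_sum]
        exact sum_comm
    _ = ∑ _a : Fin n, (1 - p + p * Real.exp l) ^ m :=
        sum_congr rfl fun a _ => by
          rw [← sum_binomPMF_mul_pow]
          exact sum_prod_apply_mul_apply (sum_binomPMF m p) (fun k => Real.exp l ^ (k : ℕ)) a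
    _ = n * (1 - p + p * Real.exp l) ^ m := by
        rw [sum_const, card_univ, Fintype.card_fin, nsmul_eq_mul]

lemma mul_expMaxBinom_le (hn : n ≠ 0) (hp₀ : 0 ≤ p) (hp₁ : p ≤ 1) (l : ℝ) :
    l * expMaxBinom n m p ≤ Real.log n + m * p * (Real.exp l - 1) := by
  have base_nonneg : 0 ≤ 1 - p + p * Real.exp l :=
    add_nonneg (sub_nonneg.2 hp₁) (mul_nonneg hp₀ (Real.exp_pos l).le)
  have base_le_exp : 1 - p + p * Real.exp l ≤ Real.exp (p * (Real.exp l - 1)) := by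
    linarith [Real.add_one_le_exp (p * (Real.exp l - 1))]
  rw [← Real.exp_le_exp]
  calc Real.exp (l * expMaxBinom n m p)
      = Real.exp (∑ j : Fin n → Fin (m + 1), (∏ i, binomPMF m p (j i)) * (l * maxEntry j)) := by
        rw [expMaxBinom, mul_sum]
        exact congrArg Real.exp (sum_congr rfl fun j _ => mul_left_comm _ _ _)
    _ ≤ ∑ j : Fin n → Fin (m + 1), (∏ i, binomPMF m p (j i)) * Real.exp (l * maxEntry j) :=
        convexOn_exp.map_sum_le (fun j _ => prod_binomPMF_nonneg hp₀ hp₁ j)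
          (sum_prod_apply_eq_one (sum_binomPMF m p)) fun j _ => Set.mem_univ _
    _ ≤ n * (1 - p + p * Real.exp l) ^ m :=
        sum_prod_binomPMF_mul_exp_maxEntry_le hn hp₀ hp₁ l
    _ ≤ n * Real.exp (p * (Real.exp l - 1)) ^ m :=
        mul_le_mul_of_nonneg_left (pow_le_pow_left₀ base_nonneg base_le_exp m) (Nat.cast_nonneg n)
    _ = Real.exp (Real.log n + m * p * (Real.exp l - 1)) := by
        rw [Real.exp_add, Real.exp_log (Nat.cast_pos.2 (Nat.pos_of_ne_zero hn)),
          ← Real.exp_nat_mul, mul_assoc]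

lemma expMaxBinom_sub_le (hn : 2 ≤ n) (hp₀ : 0 ≤ p) (hp₁ : p ≤ 1) :
    expMaxBinom n m p - m * p ≤ 2 * √(m * p * Real.log n) + 2 * Real.log n :=
  sub_le_of_forall_mul_le_add_mul_exp_sub_one (Real.log_pos (by exact_mod_cast hn))
    (mul_nonneg (Nat.cast_nonneg m) hp₀) fun l _ => mul_expMaxBinom_le (by omega) hp₀ hp₁ l

end Binomial

lemma sum_Icc_inv_sqrt_le (N : ℕ) : ∑ t ∈ Icc 1 N, (√(t : ℝ))⁻¹ ≤ 2 * √(N : ℝ) := by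
  induction N with
  | zero => simp
  | succ k ih =>
    have hpos : 0 < √((k + 1 : ℕ) : ℝ) := Real.sqrt_pos.2 (by positivity)
    have hsq : √((k + 1 : ℕ) : ℝ) ^ 2 = √(k : ℝ) ^ 2 + 1 := by
      rw [Real.sq_sqrt (Nat.cast_nonneg _), Real.sq_sqrt (Nat.cast_nonneg _), Nat.cast_succ]
    have telescope : (√((k + 1 : ℕ) : ℝ))⁻¹ ≤ 2 * √((k + 1 : ℕ) : ℝ) - 2 * √(k : ℝ) := by
      rw [inv_le_iff_one_le_mul₀ hpos]
      nlinarith [sq_nonneg (√((k + 1 : ℕ) : ℝ) - √(k : ℝ))]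
    rw [sum_Icc_succ_top (by omega)]
    linarith

lemma sum_Icc_inv_le_one_add_log (N : ℕ) : ∑ t ∈ Icc 1 N, (t : ℝ)⁻¹ ≤ 1 + Real.log N := by
  simpa [harmonic_eq_sum_Icc] using harmonic_le_one_add_log N

lemma sum_Icc_expMaxBinom_sub_div_le {n m N : ℕ} (hn : 2 ≤ n) (hm : m ≠ 0) (hN : N ≤ n * m) :
    ∑ t ∈ Icc 1 N, (expMaxBinom n m ((t : ℝ) / (n * m)) - (t : ℝ) / n) / t ≤
      4 * √(Real.log n / n * N) + 2 * Real.log n * (1 + Real.log N) := by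
  have hlog : 0 < Real.log n := Real.log_pos (by exact_mod_cast hn)
  have term_le (t : ℕ) (ht : t ∈ Icc 1 N) :
      (expMaxBinom n m ((t : ℝ) / (n * m)) - (t : ℝ) / n) / t ≤
        2 * √(Real.log n / n) * (√(t : ℝ))⁻¹ + 2 * Real.log n * (t : ℝ)⁻¹ := by
    have hp₁ : (t : ℝ) / (n * m) ≤ 1 :=
      div_le_one_of_le₀ (by exact_mod_cast (mem_Icc.1 ht).2.trans hN) (by positivity)
    have hmean : (m : ℝ) * (t / (n * m)) = t / n := by field_simp
    calc (expMaxBinom n m ((t : ℝ) / (n * m)) - (t : ℝ) / n) / t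
        ≤ (2 * √(t / n * Real.log n) + 2 * Real.log n) / t := by
          gcongr
          rw [← hmean]
          exact expMaxBinom_sub_le hn (by positivity) hp₁
      _ = 2 * √(Real.log n / n) * (√(t : ℝ))⁻¹ + 2 * Real.log n * (t : ℝ)⁻¹ := by
          rw [div_mul_comm, Real.sqrt_mul (by positivity), ← Real.sqrt_div_self]
          ring
  calc ∑ t ∈ Icc 1 N, (expMaxBinom n m ((t : ℝ) / (n * m)) - (t : ℝ) / n) / t
      ≤ ∑ t ∈ Icc 1 N,
          (2 * √(Real.log n / n) * (√(t : ℝ))⁻¹ + 2 * Real.log n * (t : ℝ)⁻¹) :=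
        sum_le_sum term_le
    _ = 2 * √(Real.log n / n) * ∑ t ∈ Icc 1 N, (√(t : ℝ))⁻¹ +
          2 * Real.log n * ∑ t ∈ Icc 1 N, (t : ℝ)⁻¹ := by
        rw [sum_add_distrib, mul_sum, mul_sum]
    _ ≤ 2 * √(Real.log n / n) * (2 * √(N : ℝ)) + 2 * Real.log n * (1 + Real.log N) := by
        gcongr
        · exact sum_Icc_inv_sqrt_le N
        · exact sum_Icc_inv_le_one_add_log N
    _ = 4 * √(Real.log n / n * N) + 2 * Real.log n * (1 + Real.log N) := by
        rw [Real.sqrt_mul (by positivity)]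
        ring

lemma log_rpow_le_mul_rpow {x a b : ℝ} (hx : 1 ≤ x) (ha : 0 < a) (hb : 0 < b) :
    Real.log x ^ b ≤ (b / a) ^ b * x ^ a := by
  have hx₀ : 0 ≤ x := zero_le_one.trans hx
  calc Real.log x ^ b
      ≤ (x ^ (a / b) / (a / b)) ^ b :=
        Real.rpow_le_rpow (Real.log_nonneg hx) (Real.log_le_rpow_div hx₀ (div_pos ha hb)) hb.le
    _ = (b / a) ^ b * x ^ a := by
        rw [div_eq_mul_inv, inv_div, mul_comm, Real.mul_rpow (by positivity) (by positivity),
          ← Real.rpow_mul hx₀, div_mul_cancel₀ _ hb.ne']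

lemma sqrt_le_mul_log_one_div_rpow_neg {ε s : ℝ} (hε : 0 < ε) (hs₀ : 0 < s) (hs₁ : s < 1) :
    √s ≤ (2 * ε) ^ ε * Real.log (1 / s) ^ (-ε) := by
  have hlog : 0 < Real.log (1 / s) := Real.log_pos (one_lt_one_div hs₀ hs₁)
  have growth : Real.log (1 / s) ^ ε ≤ (2 * ε) ^ ε / √s := by
    have := log_rpow_le_mul_rpow (one_lt_one_div hs₀ hs₁).le one_half_pos hε
    rwa [← Real.sqrt_eq_rpow, Real.sqrt_div zero_le_one, Real.sqrt_one, div_div_eq_mul_div,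
      div_one, mul_one_div, mul_comm ε] at this
  rw [Real.rpow_neg hlog.le, ← div_eq_mul_inv]
  exact (le_div_comm₀ (Real.rpow_pos_of_pos hlog ε) (Real.sqrt_pos.2 hs₀)).1 growth

lemma mul_le_sqrt_mul_mul_rpow_neg {L M Q ε : ℝ} (hL : 0 ≤ L) (hM : 0 < M) (hQ : 0 < Q)
    (h : √(L / M) * Q ^ (1 + ε) ≤ 1) : L * Q ≤ √(M * L) * Q ^ (-ε) := by
  have hfactor : √(M * L) * √(L / M) = L := by
    have : M * L * (L / M) = L * L := by field_simp
    rw [← Real.sqrt_mul (by positivity), this, Real.sqrt_mul_self hL]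
  have hpow : Q ^ (1 + ε) * Q ^ (-ε) = Q := by
    rw [← Real.rpow_add hQ, add_neg_cancel_right, Real.rpow_one]
  calc L * Q = √(M * L) * √(L / M) * (Q ^ (1 + ε) * Q ^ (-ε)) := by rw [hfactor, hpow]
    _ = √(M * L) * Q ^ (-ε) * (√(L / M) * Q ^ (1 + ε)) := by ring
    _ ≤ √(M * L) * Q ^ (-ε) := mul_le_of_le_one_right (by positivity) h

lemma log_mul_log_le_of_sqrt_mul_le {n m : ℕ} {s ε : ℝ} (hε : 0 ≤ ε) (hs₀ : 0 < s) (hs₁ : s < 1)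
    (hsnm : 1 ≤ s * ((n : ℝ) * m))
    (hsmall : √(2 * Real.log n / m) * Real.log ((n : ℝ) * m) ^ (1 + ε) ≤ 1) :
    Real.log n * Real.log ((n : ℝ) * m) ≤ √(m * Real.log n) * Real.log (1 / s) ^ (-ε) := by
  have hm : (0 : ℝ) < m := by
    refine (Nat.cast_nonneg m).lt_of_ne fun h => ?_
    norm_num [← h] at hsnm
  have hlogn : 0 ≤ Real.log n := Real.log_natCast_nonneg n
  have hlogs : 0 < Real.log (1 / s) := Real.log_pos (one_lt_one_div hs₀ hs₁)
  have hlogs_le : Real.log (1 / s) ≤ Real.log ((n : ℝ) * m) :=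
    Real.log_le_log (one_div_pos.2 hs₀) ((div_le_iff₀' hs₀).2 hsnm)
  have hlognm : 0 < Real.log ((n : ℝ) * m) := hlogs.trans_le hlogs_le
  calc Real.log n * Real.log ((n : ℝ) * m)
      ≤ √(m * Real.log n) * Real.log ((n : ℝ) * m) ^ (-ε) := by
        refine mul_le_sqrt_mul_mul_rpow_neg hlogn hm hlognm (le_trans ?_ hsmall)
        gcongr
        linarith
    _ ≤ √(m * Real.log n) * Real.log (1 / s) ^ (-ε) :=
        mul_le_mul_of_nonneg_left
          (Real.rpow_le_rpow_of_nonpos hlogs hlogs_le (neg_nonpos.2 hε)) (Real.sqrt_nonneg _)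

lemma one_add_log_le_three_mul_log {x y : ℝ} (hx : 0 < x) (hxy : x ≤ y) (hy : 2 ≤ y) :
    1 + Real.log x ≤ 3 * Real.log y := by
  linarith [Real.log_two_gt_d9, Real.log_le_log two_pos hy, Real.log_le_log hx hxy]

theorem stmt14_general (ε : ℝ) (hε : 0 < ε) :
    ∃ C > 0, ∀ (n m : ℕ) (s : ℝ), 2 ≤ n → 0 < s → s < 1 → 1 ≤ s * ((n : ℝ) * m) →
      √(2 * Real.log n / m) * Real.log ((n : ℝ) * m) ^ (1 + ε) ≤ 1 →
      ∑ t ∈ Icc 1 ⌊s * ((n : ℝ) * m)⌋₊,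
          (expMaxBinom n m ((t : ℝ) / (n * m)) - (t : ℝ) / n) / t ≤
        C * √(m * Real.log n) * Real.log (1 / s) ^ (-ε) := by
  refine ⟨4 * (2 * ε) ^ ε + 6, by positivity, fun n m s hn hs₀ hs₁ hsnm hsmall => ?_⟩
  have hm : m ≠ 0 := by
    rintro rfl
    norm_num at hsnm
  have hnm : 2 ≤ n * m := hn.trans (Nat.le_mul_of_pos_right n (Nat.pos_of_ne_zero hm))
  set N := ⌊s * ((n : ℝ) * m)⌋₊
  have hN : (N : ℝ) ≤ s * (n * m) := Nat.floor_le (by positivity)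
  have hNnm : (N : ℝ) ≤ n * m := hN.trans (mul_le_of_le_one_left (by positivity) hs₁.le)
  have hN₀ : (0 : ℝ) < N := Nat.cast_pos.2 (Nat.floor_pos.2 hsnm)
  have sqrt_term : √(Real.log n / n * N) ≤
      √(m * Real.log n) * ((2 * ε) ^ ε * Real.log (1 / s) ^ (-ε)) := by
    calc √(Real.log n / n * N) ≤ √(Real.log n / n * (s * (n * m))) := by gcongr
      _ = √(m * Real.log n) * √s := by
          rw [← Real.sqrt_mul (by positivity)]
          congr 1
          field_simp
      _ ≤ _ := by
          gcongr
          exact sqrt_le_mul_log_one_div_rpow_neg hε hs₀ hs₁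
  have log_term : Real.log n * (1 + Real.log N) ≤
      3 * (√(m * Real.log n) * Real.log (1 / s) ^ (-ε)) := by
    calc Real.log n * (1 + Real.log N)
        ≤ Real.log n * (3 * Real.log ((n : ℝ) * m)) :=
          mul_le_mul_of_nonneg_left
            (one_add_log_le_three_mul_log hN₀ hNnm (by exact_mod_cast hnm))
            (Real.log_natCast_nonneg n)
      _ ≤ _ := by
          linarith [log_mul_log_le_of_sqrt_mul_le hε.le hs₀ hs₁ hsnm hsmall]
  linarith [sum_Icc_expMaxBinom_sub_div_le hn hm (N := N) (by exact_mod_cast hNnm)]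

/-- The lower tail sum `Σ_{t=1}^{⌊snm⌋} E[max_i Y_i(t) - t/n]/t` with
`Y_1(t), …, Y_n(t)` i.i.d. `Binomial(m, t/(nm))` (so that `E[Y_i(t)] = t/n`). -/
theorem stmt14 (ε : ℝ) (hε : 0 < ε) :
    ∃ C > 0, ∀ (n m : ℕ) (s : ℝ), 2 ≤ n → 2 ≤ m →
      0 < s → s ≤ 1 / Real.exp 1 → 1 ≤ s * ((n : ℝ) * m) →
      Real.sqrt (2 * Real.log n / m) * (Real.log ((n : ℝ) * m)) ^ ((1 : ℝ) + ε) ≤ 1 →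
      ∑ t ∈ Finset.Icc 1 ⌊s * ((n : ℝ) * m)⌋₊,
          (expMaxBinom n m ((t : ℝ) / (n * m)) - (t : ℝ) / n) / t ≤
        C * Real.sqrt (m * Real.log n) * (Real.log (1 / s)) ^ (-ε) := by
  obtain ⟨C, hC, h⟩ := stmt14_general ε hε
  exact ⟨C, hC, fun n m s hn _ hs hse => h n m s hn hs
    (hse.trans_lt ((div_lt_one (Real.exp_pos 1)).2 (Real.one_lt_exp_iff.2 one_pos)))⟩
end

section
/- There exists a universal constant C > 0 such that for all integers n ≥ 2, m ≥ 1 with 2 ln n ≤ m and all s ∈ (0, 1/2], the following holds: with Y_1(t),...,Y_n(t) i.i.d. Binomial(m, t/(nm)) for each t, one has Σ_{t=⌈(1−s)nm⌉}^{nm} E[max_{1≤i≤n} Y_i(t) − t/n]/t ≤ C·(s + 1/(nm))·√(m·ln n). -/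
open Finset

/-!
The maximum of `n` centred sub-Gaussian variables with variance proxy `c` has expectation at most
`√(2 c log n)`, whatever their joint law: by Jensen and a union bound,
`exp (t 𝔼 max) ≤ n exp (c t² / 2)` for every real `t`, so the quadratic
`c / 2 · t² - (𝔼 max) t + log n` is nonnegative and has nonpositive discriminant. By Hoeffding's
lemma a `Binomial(m, p)` variable has proxy `m / 4`, so the numerators of the summands are at most
`√(m log n / 2)`, while there are at most `s n m + 1` summands, with denominators at least
`(1 - s) n m`.
-/

section MaximalInequality

open MeasureTheory ProbabilityTheory Real

variable {Ω ι : Type*} {mΩ : MeasurableSpace Ω} {μ : Measure Ω} {s : Finset ι} {X : ι → Ω → ℝ}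

lemma integrable_finsetSup' (hs : s.Nonempty) (hX : ∀ i ∈ s, Integrable (X i) μ) :
    Integrable (s.sup' hs X) μ :=
  Finset.sup'_induction (p := (Integrable · μ)) hs X (fun _ hf _ hg => hf.sup hg) hX

lemma exp_mul_finsetSup'_le_sum (hs : s.Nonempty) (t : ℝ) (ω : Ω) :
    exp (t * s.sup' hs X ω) ≤ ∑ i ∈ s, exp (t * X i ω) := by
  obtain ⟨i, hi, hmax⟩ := s.exists_mem_eq_sup' hs (fun i => X i ω)
  rw [Finset.sup'_apply, hmax]
  exact Finset.single_le_sum (f := fun i => exp (t * X i ω)) (fun _ _ => (exp_pos _).le) hi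

lemma integrable_exp_mul_finsetSup' (hs : s.Nonempty) {t : ℝ}
    (hX : ∀ i ∈ s, AEMeasurable (X i) μ)
    (hexp : ∀ i ∈ s, Integrable (fun ω => exp (t * X i ω)) μ) :
    Integrable (fun ω => exp (t * s.sup' hs X ω)) μ := by
  have hmax : AEMeasurable (s.sup' hs X) μ :=
    Finset.sup'_induction (p := (AEMeasurable · μ)) hs X (fun _ hf _ hg => hf.sup hg) hX
  refine (integrable_finsetSum s hexp).mono' (hmax.const_mul t).exp.aestronglyMeasurable
    (ae_of_all _ fun ω => ?_)
  rw [norm_of_nonneg (exp_pos _).le]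
  exact exp_mul_finsetSup'_le_sum hs t ω

lemma exp_integral_le_integral_exp [IsProbabilityMeasure μ] {Y : Ω → ℝ} (hY : Integrable Y μ)
    (hexp : Integrable (fun ω => exp (Y ω)) μ) : exp (μ[Y]) ≤ ∫ ω, exp (Y ω) ∂μ :=
  convexOn_exp.map_integral_le continuous_exp.continuousOn isClosed_univ (by simp) hY hexp

lemma mul_integral_finsetSup'_le_of_hasSubgaussianMGF [IsProbabilityMeasure μ] {c : NNReal}
    (hs : s.Nonempty) (hX : ∀ i ∈ s, HasSubgaussianMGF (X i) c μ) (t : ℝ) :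
    t * μ[s.sup' hs X] ≤ log #s + c * t ^ 2 / 2 := by
  have hmax := integrable_finsetSup' hs fun i hi => (hX i hi).integrable
  have hX_exp : ∀ i ∈ s, Integrable (fun ω => exp (t * X i ω)) μ :=
    fun i hi => (hX i hi).integrable_exp_mul t
  have hmax_exp := integrable_exp_mul_finsetSup' hs (fun i hi => (hX i hi).aemeasurable) hX_exp
  have hcard : (0 : ℝ) < #s := by exact_mod_cast hs.card_pos
  rw [← exp_le_exp, exp_add, exp_log hcard, ← integral_const_mul]
  calc exp (∫ ω, t * s.sup' hs X ω ∂μ)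
      ≤ ∫ ω, exp (t * s.sup' hs X ω) ∂μ :=
        exp_integral_le_integral_exp (hmax.const_mul t) hmax_exp
    _ ≤ ∫ ω, ∑ i ∈ s, exp (t * X i ω) ∂μ :=
        integral_mono hmax_exp (integrable_finsetSum s hX_exp) (exp_mul_finsetSup'_le_sum hs t)
    _ = ∑ i ∈ s, mgf (X i) μ t := integral_finsetSum s hX_exp
    _ ≤ ∑ _i ∈ s, exp (c * t ^ 2 / 2) := Finset.sum_le_sum fun i hi => (hX i hi).mgf_le t
    _ = #s * exp (c * t ^ 2 / 2) := by rw [Finset.sum_const, nsmul_eq_mul]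

lemma integral_finsetSup'_le_of_hasSubgaussianMGF [IsProbabilityMeasure μ] {c : NNReal}
    (hs : s.Nonempty) (hX : ∀ i ∈ s, HasSubgaussianMGF (X i) c μ) :
    μ[s.sup' hs X] ≤ √(2 * c * log #s) := by
  have hdiscrim : discrim ((c : ℝ) / 2) (-μ[s.sup' hs X]) (log #s) ≤ 0 :=
    discrim_le_zero fun t => by
      linarith [mul_integral_finsetSup'_le_of_hasSubgaussianMGF hs hX t]
  refine le_sqrt_of_sq_le ?_
  rw [discrim] at hdiscrim
  linarith

end MaximalInequality

section Binomial

open MeasureTheory ProbabilityTheory Real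
open scoped unitInterval

lemma hasSubgaussianMGF_bernoulliMeasure (p : I) :
    HasSubgaussianMGF (fun x : ℝ => x - p) (1 / 4) Ber(1, 0, p) := by
  have hmem : ∀ᵐ x ∂Ber((1 : ℝ), 0, p), x ∈ Set.Icc (0 : ℝ) 1 :=
    (mem_ae_iff_prob_eq_one measurableSet_Icc).2
      (bernoulliMeasure_apply_of_mem_of_mem p measurableSet_Icc (by simp) (by simp))
  have hmean : ∫ x : ℝ, id x ∂Ber(1, 0, p) = p := by simp [integral_bernoulliMeasure]
  have h := hasSubgaussianMGF_of_mem_Icc aemeasurable_id hmem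
  have hproxy : (‖(1 : ℝ) - 0‖₊ / 2) ^ 2 = 1 / 4 := by
    rw [sub_zero, nnnorm_one]
    norm_num
  rwa [hmean, hproxy] at h

lemma mgf_natCast_binomial (n : ℕ) (p : I) (t : ℝ) :
    mgf (fun k : ℕ => (k : ℝ)) Bin(n, p) t = (p * exp t + (1 - p)) ^ n := by
  rw [mgf, integral_binomial, add_pow, Nat.range_succ_eq_Iic]
  refine Finset.sum_congr rfl fun k _ => ?_
  rw [mul_pow, ← exp_nat_mul, mul_comm t, smul_eq_mul]
  ring

lemma mgf_sub_mean_binomial_eq_pow (n : ℕ) (p : I) (t : ℝ) :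
    mgf (fun k : ℕ => (k : ℝ) - n * p) Bin(n, p) t =
      mgf (fun x : ℝ => x - p) Ber(1, 0, p) t ^ n := by
  have hbernoulli : mgf (fun x : ℝ => x) Ber(1, 0, p) t = p * exp t + (1 - p) := by
    simp [mgf, integral_bernoulliMeasure]
  simp only [sub_eq_add_neg, mgf_add_const]
  rw [mgf_natCast_binomial, hbernoulli, mul_pow, ← exp_nat_mul]
  ring_nf

lemma hasSubgaussianMGF_binomial (n : ℕ) (p : I) :
    HasSubgaussianMGF (fun k : ℕ => (k : ℝ) - n * p) (n / 4) Bin(n, p) where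
  integrable_exp_mul _ := integrable_binomial _
  mgf_le t := by
    calc mgf (fun k : ℕ => (k : ℝ) - n * p) Bin(n, p) t
        = mgf (fun x : ℝ => x - p) Ber(1, 0, p) t ^ n := mgf_sub_mean_binomial_eq_pow n p t
      _ ≤ exp ((1 / 4 : NNReal) * t ^ 2 / 2) ^ n :=
          pow_le_pow_left₀ mgf_nonneg ((hasSubgaussianMGF_bernoulliMeasure p).mgf_le t) n
      _ = exp ((n / 4 : NNReal) * t ^ 2 / 2) := by
          rw [← exp_nat_mul]
          push_cast
          ring_nf

/-- The binomial distribution with parameters `m` and `p` as a measure on `Fin (m + 1)`, the index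
type of the sums in `expMaxBinom`. -/
noncomputable def finBinomial (m : ℕ) (p : I) : Measure (Fin (m + 1)) :=
  Bin(m, p).comap Fin.val

variable {n m : ℕ} {p : I}

lemma measurableEmbedding_finVal : MeasurableEmbedding (Fin.val : Fin m → ℕ) where
  injective := Fin.val_injective
  measurable := .of_discrete
  measurableSet_image' _ _ := .of_discrete

lemma ae_binomial_mem_range_finVal :
    ∀ᵐ k ∂Bin(m, p), k ∈ Set.range (Fin.val : Fin (m + 1) → ℕ) := by
  filter_upwards [ae_le_of_hasLaw_binomial HasLaw.id] with k hk
  exact ⟨⟨k, Nat.lt_succ_of_le hk⟩, rfl⟩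

instance isProbabilityMeasure_finBinomial : IsProbabilityMeasure (finBinomial m p) :=
  measurableEmbedding_finVal.isProbabilityMeasure_comap ae_binomial_mem_range_finVal

lemma measurePreserving_finVal_finBinomial :
    MeasurePreserving Fin.val (finBinomial m p) Bin(m, p) where
  measurable := .of_discrete
  map_eq := by
    rw [finBinomial, measurableEmbedding_finVal.map_comap,
      Measure.restrict_eq_self_of_ae_mem ae_binomial_mem_range_finVal]

lemma finBinomial_real_singleton (k : Fin (m + 1)) :
    (finBinomial m p).real {k} = binomPMF m p k := by
  rw [finBinomial, measureReal_def, measurableEmbedding_finVal.comap_apply, Set.image_singleton,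
    ← measureReal_def, binomial_real_singleton, binomPMF]

lemma expMaxBinom_eq_integral :
    expMaxBinom n m p =
      ∫ j, (maxEntry j : ℝ) ∂Measure.pi fun _ : Fin n => finBinomial m p := by
  rw [integral_fintype .of_finite, expMaxBinom]
  refine Finset.sum_congr rfl fun j _ => ?_
  rw [measureReal_def, Measure.pi_singleton, ENNReal.toReal_prod, smul_eq_mul]
  simp only [← measureReal_def, finBinomial_real_singleton]

lemma hasSubgaussianMGF_eval_pi_finBinomial (i : Fin n) :
    HasSubgaussianMGF (fun j : Fin n → Fin (m + 1) => (j i : ℝ) - m * p) (m / 4)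
      (Measure.pi fun _ => finBinomial m p) := by
  have hlaw := measurePreserving_finVal_finBinomial.comp
    (measurePreserving_eval (fun _ : Fin n => finBinomial m p) i)
  exact .of_map (X := fun k : ℕ => (k : ℝ) - m * p) hlaw.measurable.aemeasurable
    (hlaw.map_eq ▸ hasSubgaussianMGF_binomial m p)

lemma sup'_entry_sub_eq_maxEntry_sub (hn : (univ : Finset (Fin n)).Nonempty) (a : ℝ)
    (j : Fin n → Fin (m + 1)) :
    univ.sup' hn (fun i => (j i : ℝ) - a) = maxEntry j - a := by
  rw [maxEntry, ← Finset.sup'_eq_sup hn]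
  have hmono : Monotone fun k : ℕ => (k : ℝ) - a := fun k l h =>
    sub_le_sub_right (Nat.cast_le.2 h) a
  exact (Finset.apply_sup'_eq_sup'_comp hn (fun k : ℕ => (k : ℝ) - a) hmono.map_sup).symm

lemma expMaxBinom_sub_mean_le {p : ℝ} (hn : 0 < n) (hp : p ∈ Set.Icc (0 : ℝ) 1) :
    expMaxBinom n m p - m * p ≤ √(m * log n / 2) := by
  lift p to I using hp
  have hne : (univ : Finset (Fin n)).Nonempty := ⟨⟨0, hn⟩, mem_univ _⟩
  have hmax := integral_finsetSup'_le_of_hasSubgaussianMGF hne fun i _ =>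
    hasSubgaussianMGF_eval_pi_finBinomial (m := m) (p := p) i
  calc expMaxBinom n m p - m * p
      = ∫ j, ((maxEntry j : ℝ) - m * p) ∂Measure.pi fun _ : Fin n => finBinomial m p := by
        rw [expMaxBinom_eq_integral, integral_sub .of_finite .of_finite, integral_const,
          probReal_univ, one_smul]
    _ ≤ √(2 * (m / 4 : NNReal) * log #(univ : Finset (Fin n))) := by
        simpa only [Finset.sup'_apply, sup'_entry_sub_eq_maxEntry_sub] using hmax
    _ = √(m * log n / 2) := by
        rw [card_univ, Fintype.card_fin]
        push_cast
        ring_nf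

end Binomial

lemma card_Icc_natCeil_le {x : ℝ} {N : ℕ} (hx : x ≤ N + 1) :
    (#(Icc ⌈x⌉₊ N) : ℝ) ≤ N + 1 - x := by
  have hceil : ⌈x⌉₊ ≤ N + 1 := Nat.ceil_le.2 (by exact_mod_cast hx)
  rw [Nat.card_Icc, Nat.cast_sub hceil]
  push_cast
  linarith [Nat.le_ceil x]

lemma expMaxBinom_sub_mean_div_le {n m t : ℕ} {a : ℝ} (hn : 0 < n) (hm : 0 < m) (ha : 0 < a)
    (hat : a ≤ t) (ht : t ≤ n * m) :
    (expMaxBinom n m (t / (n * m)) - t / n) / t ≤ √(m * Real.log n / 2) / a := by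
  have hmean : (t : ℝ) / n = m * (t / (n * m)) := by field_simp
  have hp : (t : ℝ) / (n * m) ∈ Set.Icc (0 : ℝ) 1 :=
    ⟨by positivity, div_le_one_of_le₀ (by exact_mod_cast ht) (by positivity)⟩
  rw [hmean]
  exact div_le_div₀ (Real.sqrt_nonneg _) (expMaxBinom_sub_mean_le hn hp) ha hat

theorem stmt15_general {n m : ℕ} {s : ℝ} (hn : 0 < n) (hm : 0 < m) (hs0 : 0 ≤ s) (hs1 : s < 1) :
    ∑ t ∈ Finset.Icc ⌈(1 - s) * ((n : ℝ) * m)⌉₊ (n * m),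
        (expMaxBinom n m ((t : ℝ) / (n * m)) - (t : ℝ) / n) / t ≤
      (1 - s)⁻¹ * (s + 1 / ((n : ℝ) * m)) * √(m * Real.log n / 2) := by
  set B := √(m * Real.log n / 2) / ((1 - s) * (n * m))
  have hN : (0 : ℝ) < n * m := by positivity
  have hs : 0 < 1 - s := sub_pos.2 hs1
  have hcard : (#(Icc ⌈(1 - s) * ((n : ℝ) * m)⌉₊ (n * m)) : ℝ) ≤ s * (n * m) + 1 := by
    refine (card_Icc_natCeil_le ?_).trans_eq ?_
    · push_cast
      linarith [mul_nonneg hs0 hN.le]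
    · push_cast
      ring
  calc _ ≤ #(Icc ⌈(1 - s) * ((n : ℝ) * m)⌉₊ (n * m)) • B :=
        sum_le_card_nsmul _ _ _ fun t ht =>
          expMaxBinom_sub_mean_div_le hn hm (mul_pos hs hN) (Nat.ceil_le.1 (mem_Icc.1 ht).1)
            (mem_Icc.1 ht).2
    _ ≤ (s * (n * m) + 1) * B := by
        rw [nsmul_eq_mul]
        gcongr
    _ = _ := by
        simp only [B]
        field_simp

/-- The upper tail sum `Σ_{t=⌈(1-s)nm⌉}^{nm} E[max_i Y_i(t) - t/n]/t` with
`Y_1(t), …, Y_n(t)` i.i.d. `Binomial(m, t/(nm))` (so that `E[Y_i(t)] = t/n`). -/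
theorem stmt15 :
    ∃ C > 0, ∀ (n m : ℕ) (s : ℝ), 2 ≤ n → 1 ≤ m → 2 * Real.log n ≤ m →
      0 < s → s ≤ 1 / 2 →
      ∑ t ∈ Finset.Icc ⌈(1 - s) * ((n : ℝ) * m)⌉₊ (n * m),
          (expMaxBinom n m ((t : ℝ) / (n * m)) - (t : ℝ) / n) / t ≤
        C * (s + 1 / ((n : ℝ) * m)) * Real.sqrt (m * Real.log n) := by
  refine ⟨2, two_pos, fun n m s hn hm _ hs0 hs1 =>
    (stmt15_general (by lia) (by lia) hs0.le (by linarith)).trans ?_⟩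
  gcongr
  · exact inv_le_of_inv_le₀ two_pos (by linarith)
  · exact half_le_self (by positivity)
end
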